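/- Let K be a field, let λ = (λ₁ ≥ … ≥ λ_r > 0) and μ = (μ₁ ≥ … ≥ μ_s > 0) be partitions, let n ≥ r + s and q ≥ μ₁ be integers, and let x₁, …, xₙ be pairwise distinct nonzero elements of K. Let ρ be the partition with ρ_j = λ_j + q for 1 ≤ j ≤ r, ρ_j = q for r < j ≤ n − s, and ρ_j = q − μ_{n+1−j} for n − s < j ≤ n. Then det( (x_i^{ρ_j + n − j})_{1≤i,j≤n} ) / det( (x_i^{n−j})_{1≤i,j≤n} ) = (x₁⋯xₙ)^q · Σ_τ (−1)^{|τ|} s_{λ/τ}(x₁,…,xₙ) · s_{μ/τ'}(x₁⁻¹,…,xₙ⁻¹), where the sum is over all partitions τ with at most n parts each of size at most n (equivalently, all partitions, since the remaining terms vanish). In other words, the character of the irreducible GL_n(ℂ)-representation with highest weight (λ₁,…,λ_r,0,…,0,−μ_s,…,−μ₁) equals Σ_τ (−1)^{|τ|} s_{λ/τ}(x) s_{μ/τ'}(x⁻¹). -/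

import Mathlib

/-- A partition: a weakly decreasing sequence of naturals, eventually zero
(`parts 0 = τ₁`, `parts 1 = τ₂`, …). -/
structure NatPartition where
  parts : ℕ → ℕ
  antitone : Antitone parts
  eventually_zero : ∃ K, ∀ j, K ≤ j → parts j = 0

/-- The size `|τ|`, the sum of the parts. -/
noncomputable def NatPartition.size (τ : NatPartition) : ℕ := ∑ᶠ j, τ.parts j

/-- The number of (nonzero) parts of `τ`. -/
noncomputable def NatPartition.length (τ : NatPartition) : ℕ :=
  Set.ncard {j : ℕ | τ.parts j ≠ 0}

/-- The conjugate partition, with 1-based index: `conjugatePart l i = #{ j : l_j ≥ i }`. -/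
noncomputable def conjugatePart (l : ℕ → ℕ) (i : ℕ) : ℕ :=
  Set.ncard {j : ℕ | i ≤ l j}

/-- The complete homogeneous symmetric polynomial of degree `k ∈ ℤ` evaluated at the
`d`-tuple `x` of elements of `K`: `h_k(x)` for `k ≥ 0`, and `0` for `k < 0`. -/
noncomputable def hEval {K : Type*} [CommRing K] {d : ℕ} (x : Fin d → K) (k : ℤ) : K :=
  if 0 ≤ k then MvPolynomial.eval x (MvPolynomial.hsymm (Fin d) K k.toNat) else 0

section CompleteHomogeneous

open Finset

variable {K : Type*}

theorem hEval_of_neg [CommRing K] {d : ℕ} (x : Fin d → K) {k : ℤ} (hk : k < 0) :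
    hEval x k = 0 := by
  simp [hEval, hk]

theorem hEval_zero [CommRing K] {d : ℕ} (x : Fin d → K) : hEval x 0 = 1 := by
  simp [hEval]

theorem PowerSeries.mk_hEval [CommRing K] {d : ℕ} (x : Fin d → K) :
    PowerSeries.mk (fun k : ℕ => hEval x k) =
      ∏ i, PowerSeries.mk (fun k : ℕ => x i ^ k) := by
  ext k
  simp only [PowerSeries.coeff_prod, PowerSeries.coeff_mk, hEval, Nat.cast_nonneg, if_true,
    Int.toNat_natCast, MvPolynomial.hsymm, map_sum]
  refine Finset.sum_bij' (fun s _ => Multiset.toFinsupp (s : Multiset (Fin d)))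
    (fun l hl => ⟨Finsupp.toMultiset l, ?_⟩) ?_ ?_ ?_ ?_ ?_
  · have := (mem_finsuppAntidiag.1 hl).1
    rw [Finsupp.card_toMultiset, Finsupp.sum_fintype _ _ (by simp)]
    simpa using this
  · intro s _
    have : (s : Multiset (Fin d)).card = k := s.2
    simp only [mem_finsuppAntidiag, subset_univ, and_true]
    exact (Multiset.sum_count_eq_card fun i _ => mem_univ i).trans this
  · intro l hl
    exact mem_univ _
  · intro s _
    exact Subtype.ext (by simp)
  · intro l _
    simp
  · intro s _
    rw [Finset.prod_multiset_map_count, map_prod]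
    rw [Finset.prod_subset (subset_univ _)]
    · simp
    · intro i _ hi
      rw [Multiset.mem_toFinset, ← Multiset.count_eq_zero] at hi
      rw [hi, pow_zero, map_one]

theorem PowerSeries.mk_hEval_mul_prod_erase [CommRing K] {d : ℕ} (x : Fin d → K) (i : Fin d) :
    PowerSeries.mk (fun k : ℕ => hEval x k) *
        ∏ j ∈ univ.erase i, (1 - PowerSeries.C (x j) * PowerSeries.X) =
      PowerSeries.mk (fun k : ℕ => x i ^ k) := by
  have geom (a : K) : PowerSeries.mk (fun k : ℕ => a ^ k) *
      (1 - PowerSeries.C a * PowerSeries.X) = 1 := by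
    ext k
    rw [mul_sub, mul_one, mul_left_comm]
    cases k with
    | zero => simp
    | succ k =>
      rw [← mul_assoc]
      simp [PowerSeries.coeff_succ_mul_X, pow_succ', PowerSeries.coeff_one]
  rw [PowerSeries.mk_hEval, ← mul_prod_erase univ _ (mem_univ i), mul_assoc, ← prod_mul_distrib]
  simp [geom]

open Polynomial in
theorem natDegree_prod_one_sub_C_mul_X_le [CommRing K] {ι : Type*} (s : Finset ι) (x : ι → K) :
    (∏ j ∈ s, (1 - C (x j) * X)).natDegree ≤ #s := by
  refine (natDegree_prod_le _ _).trans ?_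
  refine (Finset.sum_le_card_nsmul _ _ 1 fun j _ => ?_).trans (by simp)
  compute_degree

/-- The matrix whose `i`-th column lists the coefficients of `∏_{j ≠ i} (1 - x_j t)`. -/
noncomputable def coeffMatrix [CommRing K] {d : ℕ} (x : Fin d → K) : Matrix (Fin d) (Fin d) K :=
  Matrix.of fun c i => (∏ j ∈ univ.erase i, (1 - Polynomial.C (x j) * Polynomial.X)).coeff c

theorem sum_hEval_mul_coeffMatrix [CommRing K] {d : ℕ} (x : Fin d → K) (i : Fin d) (k : ℕ) :
    ∑ c : Fin d, hEval x ((k : ℤ) - (c : ℕ)) * coeffMatrix x c i = x i ^ k := by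
  have h := congrArg (PowerSeries.coeff k) (PowerSeries.mk_hEval_mul_prod_erase x i)
  set p : Polynomial K := ∏ j ∈ univ.erase i, (1 - Polynomial.C (x j) * Polynomial.X) with hp
  have hpow : (∏ j ∈ univ.erase i, (1 - PowerSeries.C (x j) * PowerSeries.X) : PowerSeries K)
      = (p : PowerSeries K) := by
    rw [hp, ← Polynomial.coeToPowerSeries.ringHom_apply, map_prod]
    simp
  rw [hpow, mul_comm, PowerSeries.coeff_mul,
    Finset.Nat.sum_antidiagonal_eq_sum_range_succ_mk] at h
  simp only [PowerSeries.coeff_mk, Polynomial.coeff_coe] at h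
  rw [← h]
  have hdeg : ∀ c, d ≤ c → p.coeff c = 0 := fun c hc =>
    Polynomial.coeff_eq_zero_of_natDegree_lt <|
      (natDegree_prod_one_sub_C_mul_X_le _ x).trans_lt <| by
        rw [card_erase_of_mem (mem_univ i), card_univ, Fintype.card_fin]
        have := i.2
        omega
  simp only [coeffMatrix, Matrix.of_apply, ← hp]
  rw [Fin.sum_univ_eq_sum_range (fun c => hEval x ((k : ℤ) - (c : ℕ)) * p.coeff c) d]
  rw [Finset.sum_subset (range_subset_range.2 (le_max_left d (k + 1)))
      (fun c _ hc => by simp [hdeg c (by simpa using hc)]),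
    ← Finset.sum_subset (range_subset_range.2 (le_max_right d (k + 1)))
      (fun c _ hc => by
        rw [hEval_of_neg, zero_mul]
        simp at hc
        omega)]
  refine sum_congr rfl fun c hc => ?_
  rw [mul_comm, Nat.cast_sub (by simp at hc; omega)]

open Polynomial in
theorem coeff_prod_one_sub_C_inv_mul_X [Field K] {ι : Type*} (s : Finset ι) (x : ι → K)
    (hx : ∀ j, x j ≠ 0) {c : ℕ} (hc : c ≤ #s) :
    (∏ j ∈ s, (1 - C (x j) * X)).coeff c =
      (∏ j ∈ s, -x j) * (∏ j ∈ s, (1 - C (x j)⁻¹ * X)).coeff (#s - c) := by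
  have key : ∏ j ∈ s, (1 - C (x j) * X) =
      C (∏ j ∈ s, -x j) * reflect #s (∏ j ∈ s, (1 - C (x j)⁻¹ * X)) := by
    clear hc
    classical
    induction s using Finset.induction_on with
    | empty => simp
    | insert a s ha ih =>
      rw [prod_insert ha, prod_insert ha, prod_insert ha, card_insert_of_notMem ha, add_comm,
        reflect_mul _ _ (F := 1) (by compute_degree) (natDegree_prod_one_sub_C_mul_X_le _ _),
        ih]
      have h1 : reflect 1 (1 - C (x a)⁻¹ * X) = X - C (x a)⁻¹ := by
        rw [reflect_sub, ← C_1, reflect_C, reflect_C_mul]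
        simp
      have h2 : (1 - C (x a) * X) = C (-x a) * (X - C (x a)⁻¹) := by
        rw [mul_sub, ← C_mul, neg_mul, mul_inv_cancel₀ (hx a)]
        simp
        ring
      rw [h1, h2, C_mul]
      ring
  rw [key, coeff_C_mul, coeff_reflect, revAt_le hc]

theorem sum_hEval_inv_mul_coeffMatrix [Field K] {d : ℕ} (x : Fin d → K) (hx : ∀ j, x j ≠ 0)
    (i : Fin d) (k : ℕ) :
    ∑ c : Fin d, hEval (fun t => (x t)⁻¹) ((k : ℤ) - d + 1 + (c : ℕ)) * coeffMatrix x c i =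
      ((-1) ^ (d - 1) * ∏ j, x j) * (x i)⁻¹ ^ (k + 1) := by
  have h := sum_hEval_mul_coeffMatrix (fun t => (x t)⁻¹) i k
  rw [pow_succ, ← h, ← Equiv.sum_comp Fin.revPerm, ← mul_assoc, mul_sum, sum_mul]
  refine sum_congr rfl fun c _ => ?_
  have hc := c.2
  have hcard : #(univ.erase i) = d - 1 := by simp
  simp only [coeffMatrix, Matrix.of_apply, Fin.revPerm_apply, Fin.val_rev]
  rw [coeff_prod_one_sub_C_inv_mul_X _ x hx (by omega), hcard,
    show d - 1 - (d - (c + 1)) = (c : ℕ) by omega, ← mul_prod_erase univ x (mem_univ i),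
    prod_neg, hcard, show (k : ℤ) - d + 1 + (d - (c + 1) : ℕ) = k - (c : ℕ) by omega]
  field_simp [hx i]

end CompleteHomogeneous

section Determinants

open Finset

variable {K : Type*} [CommRing K]

/-- The Jacobi–Trudi determinant of size `d` of the sequences `l` and `t`, in terms of `h`. -/
noncomputable def jacobiTrudi (h : ℤ → K) (l t : ℕ → ℕ) (d : ℕ) : K :=
  Matrix.det (Matrix.of fun i j : Fin d => h ((l i : ℤ) - t j - (i : ℕ) + (j : ℕ)))

theorem jacobiTrudi_eq_of_le {h : ℤ → K} (hneg : ∀ k < 0, h k = 0) (hzero : h 0 = 1)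
    {l t : ℕ → ℕ} {d e : ℕ} (hde : d ≤ e) (hl : ∀ k, d ≤ k → l k = 0)
    (ht : ∀ k, d ≤ k → t k = 0) : jacobiTrudi h l t e = jacobiTrudi h l t d := by
  induction e, hde using Nat.le_induction with
  | base => rfl
  | succ e hde ih =>
    rw [← ih, jacobiTrudi, Matrix.det_succ_row _ (Fin.last e), Fin.sum_univ_castSucc,
      sum_eq_zero, zero_add]
    · simp only [Matrix.of_apply, Fin.val_last, hl e hde, ht e hde]
      have hsign : (-1 : K) ^ (e + e) = 1 := Even.neg_one_pow ⟨e, rfl⟩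
      simp only [hsign, Nat.cast_zero, sub_zero, zero_sub, neg_add_cancel, hzero, one_mul]
      rw [jacobiTrudi]
      congr 1
      ext i j
      simp [Fin.succAbove_last]
    · intro j _
      have := j.2
      rw [Matrix.of_apply, hneg, mul_zero, zero_mul]
      simp only [Fin.val_last, hl e hde, Fin.val_castSucc]
      omega

theorem jacobiTrudi_eq_zero {h : ℤ → K} (hneg : ∀ k < 0, h k = 0) {l t : ℕ → ℕ}
    (hl : Antitone l) (ht : Antitone t) {d k : ℕ} (hk : k < d) (hlt : l k < t k) :
    jacobiTrudi h l t d = 0 := by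
  rw [jacobiTrudi, Matrix.det_apply]
  refine sum_eq_zero fun σ _ => ?_
  obtain ⟨j, hj, hσ⟩ : ∃ j : Fin d, (j : ℕ) ≤ k ∧ k ≤ (σ j : ℕ) := by
    by_contra! hcon
    have hcard := Finset.card_le_card_of_injOn (s := range (k + 1)) (t := range k)
      (fun j => if hj : j < d then (σ ⟨j, hj⟩ : ℕ) else 0)
      (fun j hj => by
        have hj' : j < k + 1 := by simpa using hj
        simpa [show j < d by omega] using hcon ⟨j, by omega⟩ (by simp; omega))
      (fun i hi j hj hij => by
        have hi' : i < k + 1 := by simpa using hi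
        have hj' : j < k + 1 := by simpa using hj
        simp only [show i < d by omega, show j < d by omega, dite_true] at hij
        simpa using σ.injective (Fin.ext hij))
    simp at hcard
  rw [prod_eq_zero (mem_univ j), smul_zero]
  rw [Matrix.of_apply, hneg]
  have h1 := hl hσ
  have h2 := ht hj
  omega

/-- Expansion of a determinant according to the set of columns used by the first `r` rows. -/
theorem det_eq_sum_powersetCard {r m : ℕ} (M : Matrix (Fin (r + m)) (Fin (r + m)) K) :
    M.det = ∑ S ∈ powersetCard r (univ : Finset (Fin (r + m))),
      Matrix.det (Matrix.of fun a c : Fin (r + m) =>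
        if (a : ℕ) < r ↔ c ∈ S then M a c else 0) := by
  simp only [Matrix.det_apply]
  rw [sum_comm]
  refine sum_congr rfl fun σ _ => ?_
  set T : Finset (Fin (r + m)) := univ.filter fun c => (σ c : ℕ) < r with hT
  rw [← smul_sum, sum_eq_single_of_mem T]
  · congr 1
    exact prod_congr rfl fun c _ => by simp [hT]
  · rw [mem_powersetCard_univ]
    have : T = (univ.filter fun c : Fin (r + m) => (c : ℕ) < r).map σ.symm.toEmbedding := by
      ext c
      simp [hT]
    rw [this, card_map, Fin.card_filter_val_lt]
    omega
  · intro S _ hST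
    obtain ⟨c, hc⟩ : ∃ c, ¬ ((σ c : ℕ) < r ↔ c ∈ S) := by
      by_contra! hcon
      exact hST (by ext c; simp [hT, hcon c])
    exact prod_eq_zero (mem_univ c) (by simp [hc])

theorem det_ite_mem_eq_sign_mul {r m : ℕ} (M : Matrix (Fin (r + m)) (Fin (r + m)) K)
    (S : Finset (Fin (r + m))) (e : Equiv.Perm (Fin (r + m)))
    (he : ∀ b, e b ∈ S ↔ (b : ℕ) < r) :
    Matrix.det (Matrix.of fun a c : Fin (r + m) =>
        if (a : ℕ) < r ↔ c ∈ S then M a c else 0) =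
      (Equiv.Perm.sign e : ℤ) *
        Matrix.det (Matrix.of fun i j : Fin r => M (Fin.castAdd m i) (e (Fin.castAdd m j))) *
        Matrix.det (Matrix.of fun i j : Fin m => M (Fin.natAdd r i) (e (Fin.natAdd r j))) := by
  set N : Matrix (Fin (r + m)) (Fin (r + m)) K := Matrix.of fun a c : Fin (r + m) =>
        if (a : ℕ) < r ↔ c ∈ S then M a c else 0 with hN
  have h1 := Matrix.det_permute' e N
  have h2 : (N.submatrix id e).det =
      Matrix.det (Matrix.of fun i j : Fin r => M (Fin.castAdd m i) (e (Fin.castAdd m j))) *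
      Matrix.det (Matrix.of fun i j : Fin m => M (Fin.natAdd r i) (e (Fin.natAdd r j))) := by
    rw [← Matrix.det_submatrix_equiv_self finSumFinEquiv, ← Matrix.det_fromBlocks_zero₂₁ _ 0]
    congr 1
    ext (i | i) (j | j) <;> simp [hN, he]
  rw [mul_assoc, ← h2, h1, ← mul_assoc]
  rcases Int.units_eq_one_or (Equiv.Perm.sign e) with h | h <;> simp [h]

end Determinants

section Partitions

open Finset

theorem lt_conjugatePart_iff {t : ℕ → ℕ} (ht : Antitone t) (hzero : ∃ k, ∀ j, k ≤ j → t j = 0)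
    (i j : ℕ) : j < conjugatePart t (i + 1) ↔ i < t j := by
  classical
  have hex : ∃ k, t k < i + 1 := by
    obtain ⟨k, hk⟩ := hzero
    exact ⟨k, by simp [hk k le_rfl]⟩
  have hset : {j : ℕ | i + 1 ≤ t j} = Set.Iio (Nat.find hex) := by
    ext j
    simp only [Set.mem_ofPred_eq, Set.mem_Iio, Nat.lt_find_iff, not_lt]
    exact ⟨fun h k hk => h.trans (ht hk), fun h => h j le_rfl⟩
  have hj : j ∈ {j : ℕ | i + 1 ≤ t j} ↔ i < t j := Iff.rfl
  rw [conjugatePart, ← hj, hset, ← Finset.coe_Iio, Set.ncard_coe_finset]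
  simp

namespace NatPartition

theorem lt_conjugatePart_iff (τ : NatPartition) (i j : ℕ) :
    j < conjugatePart τ.parts (i + 1) ↔ i < τ.parts j :=
  _root_.lt_conjugatePart_iff τ.antitone τ.eventually_zero i j

theorem antitone_conjugatePart (τ : NatPartition) :
    Antitone fun i => conjugatePart τ.parts (i + 1) := by
  refine antitone_nat_of_succ_le fun i => le_of_forall_lt fun j hj => ?_
  rw [lt_conjugatePart_iff] at hj ⊢
  omega

theorem conjugatePart_eq_zero (τ : NatPartition) {i : ℕ} (hi : τ.parts 0 ≤ i) :
    conjugatePart τ.parts (i + 1) = 0 := by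
  by_contra h
  have := (τ.lt_conjugatePart_iff i 0).1 (by omega)
  omega

theorem lt_length_iff (τ : NatPartition) (j : ℕ) : j < τ.length ↔ τ.parts j ≠ 0 := by
  have h : τ.length = conjugatePart τ.parts (0 + 1) := by
    simp [length, conjugatePart, Nat.one_le_iff_ne_zero]
  rw [h, lt_conjugatePart_iff, Nat.pos_iff_ne_zero]

/-- The partitions with at most `r` parts, all of size at most `m`. -/
def box (r m : ℕ) : Set NatPartition := {τ | (∀ j, r ≤ j → τ.parts j = 0) ∧ τ.parts 0 ≤ m}

variable {r m : ℕ} {τ : NatPartition}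

theorem parts_le (hτ : τ ∈ box r m) (j : ℕ) : τ.parts j ≤ m :=
  (τ.antitone (Nat.zero_le j)).trans hτ.2

theorem conjugatePart_le (hτ : τ ∈ box r m) (i : ℕ) : conjugatePart τ.parts (i + 1) ≤ r := by
  by_contra! h
  rw [lt_conjugatePart_iff, hτ.1 r le_rfl] at h
  omega

theorem size_eq_sum (hτ : ∀ j, r ≤ j → τ.parts j = 0) : τ.size = ∑ j : Fin r, τ.parts j := by
  rw [size, Fin.sum_univ_eq_sum_range τ.parts r]
  refine finsum_eq_sum_of_support_subset _ fun j hj => ?_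
  by_contra hcon
  exact hj (hτ j (by simpa using hcon))

/-- The edge of the diagram of `τ` inside a box with `r` rows, read as a permutation: the first
`r` values form an increasing sequence given by the parts of `τ`, the remaining ones an increasing
sequence given by the parts of the conjugate partition. -/
noncomputable def edgeFun (r : ℕ) (τ : NatPartition) (a : ℕ) : ℕ :=
  if a < r then τ.parts (r - 1 - a) + a else a - conjugatePart τ.parts (a - r + 1)

theorem edgeFun_ne_and_lt_iff (hτ : τ ∈ box r m) {a b : ℕ} (hab : a < b) :
    edgeFun r τ a ≠ edgeFun r τ b ∧
      (edgeFun r τ b < edgeFun r τ a ↔ a < r ∧ r ≤ b ∧ b - r < τ.parts (r - 1 - a)) := by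
  unfold edgeFun
  by_cases hb : b < r
  · have h := τ.antitone (show r - 1 - b ≤ r - 1 - a by omega)
    rw [if_pos hb, if_pos (show a < r by omega)]
    omega
  · by_cases ha : a < r
    · have h1 := τ.lt_conjugatePart_iff (b - r) (r - 1 - a)
      have h2 := conjugatePart_le hτ (b - r)
      rw [if_neg hb, if_pos ha]
      omega
    · have h := τ.antitone_conjugatePart (show a - r ≤ b - r by omega)
      have h1 := conjugatePart_le hτ (a - r)
      simp only at h
      rw [if_neg hb, if_neg ha]
      omega

theorem edgeFun_ne (hτ : τ ∈ box r m) {a b : ℕ} (hab : a < b) :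
    edgeFun r τ a ≠ edgeFun r τ b :=
  (edgeFun_ne_and_lt_iff hτ hab).1

theorem edgeFun_lt (hτ : τ ∈ box r m) {a : ℕ} (ha : a < r + m) : edgeFun r τ a < r + m := by
  have h := parts_le hτ (r - 1 - a)
  unfold edgeFun
  split <;> omega

/-- `NatPartition.edgeFun` as a permutation. -/
noncomputable def edgePerm (hτ : τ ∈ box r m) : Equiv.Perm (Fin (r + m)) :=
  Equiv.ofBijective (fun a => ⟨edgeFun r τ a, edgeFun_lt hτ a.2⟩) <|
    Finite.injective_iff_bijective.1 fun a b hab => by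
      by_contra hne
      rcases lt_or_gt_of_ne hne with h | h
      · exact edgeFun_ne hτ h (congrArg Fin.val hab)
      · exact edgeFun_ne hτ h (congrArg Fin.val hab).symm

theorem val_edgePerm (hτ : τ ∈ box r m) (a : Fin (r + m)) :
    (edgePerm hτ a : ℕ) = edgeFun r τ a := rfl

theorem val_edgePerm_castAdd (hτ : τ ∈ box r m) (a : Fin r) :
    (edgePerm hτ (Fin.castAdd m a) : ℕ) = τ.parts (r - 1 - a) + a := by
  simp [val_edgePerm, edgeFun]

theorem val_edgePerm_natAdd (hτ : τ ∈ box r m) (b : Fin m) :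
    ((edgePerm hτ (Fin.natAdd r b) : ℕ) : ℤ) = r + b - conjugatePart τ.parts (b + 1) := by
  have h := conjugatePart_le hτ b
  simp only [val_edgePerm, edgeFun, Fin.val_natAdd, show ¬ (r + (b : ℕ) < r) by omega, if_false,
    Nat.add_sub_cancel_left]
  omega

theorem sign_edgePerm (hτ : τ ∈ box r m) : Equiv.Perm.sign (edgePerm hτ) = (-1) ^ τ.size := by
  have hterm (a b : Fin (r + m)) (hab : a < b) :
      (if edgePerm hτ a < edgePerm hτ b then (1 : ℤˣ) else -1) =
        if (a : ℕ) < r ∧ r ≤ (b : ℕ) ∧ (b : ℕ) - r < τ.parts (r - 1 - a) then -1 else 1 := by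
    obtain ⟨hne, hiff⟩ := edgeFun_ne_and_lt_iff hτ (show (a : ℕ) < b from hab)
    simp only [← hiff, Fin.lt_def, val_edgePerm]
    rcases lt_or_gt_of_ne hne with h | h <;> simp [h, h.le]
  have hrow (a : Fin (r + m)) :
      ∏ b ∈ Ioi a, (if edgePerm hτ a < edgePerm hτ b then (1 : ℤˣ) else -1) =
        if (a : ℕ) < r then (-1) ^ τ.parts (r - 1 - a) else 1 := by
    rw [prod_congr rfl fun b hb => hterm a b (mem_Ioi.1 hb)]
    split
    case isFalse ha => simp [ha]
    case isTrue ha =>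
      have hle := parts_le hτ (r - 1 - a)
      have hmin : #(univ.filter fun b : Fin m => (b : ℕ) < τ.parts (r - 1 - a)) =
          τ.parts (r - 1 - a) := by
        rw [Fin.card_filter_val_lt]
        omega
      rw [prod_subset (subset_univ _), Fin.prod_univ_add]
      · have htop (c : Fin r) : ¬ (r ≤ (c : ℕ)) := by omega
        simp [ha, htop, prod_ite, hmin]
      · intro b _ hb
        rw [if_neg]
        simp only [mem_Ioi, not_lt, Fin.le_def] at hb
        omega
  rw [Equiv.Perm.sign_eq_prod_prod_Ioi, prod_congr rfl fun a _ => hrow a, Fin.prod_univ_add,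
    size_eq_sum hτ.1, ← prod_pow_eq_pow_sum,
    ← Equiv.prod_comp Fin.revPerm (fun j : Fin r => (-1 : ℤˣ) ^ τ.parts j)]
  have hrev (a : Fin r) : r - (a + 1 : ℕ) = r - 1 - a := by omega
  simp [hrev]

/-- The set of up-steps of the edge of `τ` in an `r × m` box. -/
def edgeSet (r m : ℕ) (τ : NatPartition) : Finset (Fin (r + m)) :=
  univ.filter fun c => ∃ j < r, (c : ℕ) + j + 1 = τ.parts j + r

theorem edgePerm_mem_edgeSet_iff (hτ : τ ∈ box r m) (b : Fin (r + m)) :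
    edgePerm hτ b ∈ edgeSet r m τ ↔ (b : ℕ) < r := by
  have key (a : ℕ) (ha : a < r) : edgeFun r τ a + (r - 1 - a) + 1 = τ.parts (r - 1 - a) + r := by
    simp only [edgeFun, ha, if_true]
    omega
  simp only [edgeSet, mem_filter, mem_univ, true_and, val_edgePerm]
  constructor
  · rintro ⟨j, hj, h⟩
    have h1 := key (r - 1 - j) (by omega)
    rw [show r - 1 - (r - 1 - j) = j by omega] at h1
    by_contra hb
    exact edgeFun_ne hτ (show r - 1 - j < (b : ℕ) by omega) (by omega)
  · intro hb
    exact ⟨r - 1 - b, by omega, key b hb⟩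

theorem card_edgeSet (hτ : τ ∈ box r m) : #(edgeSet r m τ) = r := by
  have : edgeSet r m τ =
      (univ.filter fun b : Fin (r + m) => (b : ℕ) < r).map (edgePerm hτ).toEmbedding := by
    ext c
    obtain ⟨b, rfl⟩ := (edgePerm hτ).surjective c
    simp [edgePerm_mem_edgeSet_iff]
  rw [this, card_map, Fin.card_filter_val_lt]
  omega

theorem injOn_edgeSet : Set.InjOn (edgeSet r m) (box r m) := by
  intro τ hτ τ' hτ' h
  have hanti (σ : NatPartition) : StrictAnti fun j : Fin r => σ.parts j + (r - 1 - j) := by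
    intro i j hij
    have := σ.antitone (show (i : ℕ) ≤ j from hij.le)
    simp only
    omega
  have hrange {σ : NatPartition} (hσ : σ ∈ box r m) :
      Set.range (fun j : Fin r => σ.parts j + (r - 1 - j)) =
        Set.image Fin.val (edgeSet r m σ : Set (Fin (r + m))) := by
    ext c
    simp only [Set.mem_range, edgeSet, coe_filter, mem_univ, true_and, Set.mem_image,
      Set.mem_ofPred_eq]
    constructor
    · rintro ⟨j, rfl⟩
      have := parts_le hσ j
      exact ⟨⟨σ.parts j + (r - 1 - j), by omega⟩, ⟨j, j.2, by simp only; omega⟩, rfl⟩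
    · rintro ⟨c, ⟨j, hj, hc⟩, rfl⟩
      exact ⟨⟨j, hj⟩, by simp only; omega⟩
  have hfun := ((hanti τ).range_inj (hanti τ')).1 (by rw [hrange hτ, hrange hτ', h])
  have hparts : τ.parts = τ'.parts := by
    funext j
    by_cases hj : j < r
    · have := congrFun hfun ⟨j, hj⟩
      simp only at this
      omega
    · rw [hτ.1 j (by omega), hτ'.1 j (by omega)]
  cases τ
  cases τ'
  congr

theorem surjOn_edgeSet : Set.SurjOn (edgeSet r m) (box r m) {S | #S = r} := by
  intro S hS
  set f := S.orderEmbOfFin hS with hf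
  have hgap (a b : ℕ) (hab : a ≤ b) (hb : b < r) :
      (f ⟨a, by omega⟩ : ℕ) + (b - a) ≤ f ⟨b, hb⟩ := by
    induction b, hab using Nat.le_induction with
    | base => simp
    | succ b hab ih =>
      have h1 := ih (by omega)
      have h2 : f ⟨b, by omega⟩ < f ⟨b + 1, hb⟩ := f.strictMono (by simp [Fin.lt_def])
      rw [Fin.lt_def] at h2
      omega
  have hle (a : ℕ) (ha : a < r) : a ≤ (f ⟨a, ha⟩ : ℕ) := by
    have := hgap 0 a (by omega) ha
    omega
  let τ : NatPartition :=
    { parts := fun j => if hj : j < r then f ⟨r - 1 - j, by omega⟩ - (r - 1 - j) else 0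
      antitone := by
        intro i j hij
        by_cases hj : j < r
        · have := hgap (r - 1 - j) (r - 1 - i) (by omega) (by omega)
          simp only [hj, show i < r by omega, dite_true]
          omega
        · simp [hj]
      eventually_zero := ⟨r, fun j hj => by simp [show ¬ j < r by omega]⟩ }
  refine ⟨τ, ⟨fun j hj => by simp [τ, show ¬ j < r by omega], ?_⟩, ?_⟩
  · by_cases h0 : 0 < r
    · have := (f ⟨r - 1 - 0, by omega⟩).2
      simp only [τ, h0, dite_true]
      omega
    · simp [τ, h0]
  · ext c
    have hc : c ∈ S ↔ ∃ a, f a = c := by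
      rw [← Set.mem_range, hf, range_orderEmbOfFin, mem_coe]
    rw [hc, edgeSet, mem_filter]
    simp only [mem_univ, true_and]
    constructor
    · rintro ⟨j, hj, h⟩
      have := hle (r - 1 - j) (by omega)
      simp only [τ, hj, dite_true] at h
      exact ⟨⟨r - 1 - j, by omega⟩, Fin.ext (by omega)⟩
    · rintro ⟨a, rfl⟩
      have := hle a a.2
      refine ⟨r - 1 - a, by omega, ?_⟩
      simp only [τ, show r - 1 - (a : ℕ) < r by omega, dite_true,
        show r - 1 - (r - 1 - (a : ℕ)) = a by omega, Fin.eta]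
      simp only [Fin.eta] at this
      omega

theorem bijOn_edgeSet :
    Set.BijOn (edgeSet r m) (box r m) (powersetCard r (univ : Finset (Fin (r + m)))) := by
  refine ⟨fun τ hτ => by simpa [mem_powersetCard] using card_edgeSet hτ, injOn_edgeSet, ?_⟩
  convert surjOn_edgeSet (r := r) (m := m) using 1
  ext S
  simp [mem_powersetCard]

end NatPartition

end Partitions

section Composite

open Finset

variable {K : Type*}

/-- The matrix of the composite Jacobi–Trudi determinant: its first `r` rows are those of the
Jacobi–Trudi matrix of `l` in terms of `h`, in reverse order, its last `m` rows those of `u` in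
terms of `g`, with reversed columns. -/
noncomputable def compositeMatrix [CommRing K] (h g : ℤ → K) (r m : ℕ) (l u : ℕ → ℕ) :
    Matrix (Fin (r + m)) (Fin (r + m)) K :=
  Matrix.of fun a c =>
    if (a : ℕ) < r then h ((l (r - 1 - a) : ℤ) + (a : ℕ) - (c : ℕ))
    else g ((u (a - r) : ℤ) + (c : ℕ) - (a : ℕ))

theorem det_compositeMatrix_eq_finsum_mem [CommRing K] (h g : ℤ → K) (r m : ℕ) (l u : ℕ → ℕ) :
    (compositeMatrix h g r m l u).det =
      ∑ᶠ τ ∈ NatPartition.box r m, (-1 : K) ^ τ.size * jacobiTrudi h l τ.parts r *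
        jacobiTrudi g u (fun j => conjugatePart τ.parts (j + 1)) m := by
  rw [det_eq_sum_powersetCard, ← finsum_mem_coe_finset]
  refine (finsum_mem_eq_of_bijOn _ NatPartition.bijOn_edgeSet fun τ hτ => ?_).symm
  rw [det_ite_mem_eq_sign_mul _ _ (NatPartition.edgePerm hτ)
    (NatPartition.edgePerm_mem_edgeSet_iff hτ), NatPartition.sign_edgePerm hτ]
  congr 1
  · congr 1
    · simp
    · rw [jacobiTrudi, ← Matrix.det_submatrix_equiv_self Fin.revPerm]
      congr 1
      ext i j
      simp only [Matrix.submatrix_apply, Matrix.of_apply, Fin.revPerm_apply, Fin.val_rev,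
        compositeMatrix, Fin.val_castAdd, Fin.is_lt, if_true, NatPartition.val_edgePerm_castAdd,
        show r - ((i : ℕ) + 1) = r - 1 - i by omega, show r - ((j : ℕ) + 1) = r - 1 - j by omega]
      congr 1
      omega
  · rw [jacobiTrudi]
    congr 1
    ext i j
    simp only [Matrix.of_apply, compositeMatrix, Fin.val_natAdd,
      NatPartition.val_edgePerm_natAdd, show ¬ (r + (i : ℕ) < r) by omega, if_false,
      Nat.add_sub_cancel_left]
    congr 1
    push_cast
    ring

theorem det_compositeMatrix_eq_finsum [CommRing K] {h g : ℤ → K} (hneg : ∀ k < 0, h k = 0)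
    (hzero : h 0 = 1) (gneg : ∀ k < 0, g k = 0) (gzero : g 0 = 1) {r s m : ℕ} {l u : ℕ → ℕ}
    (hl : Antitone l) (hu : Antitone u) (hlr : ∀ j, r ≤ j → l j = 0) (hus : ∀ j, s ≤ j → u j = 0)
    (hsm : s ≤ m) :
    (compositeMatrix h g r m l u).det =
      ∑ᶠ τ : NatPartition, (-1 : K) ^ τ.size * jacobiTrudi h l τ.parts (r + τ.length) *
        jacobiTrudi g u (fun j => conjugatePart τ.parts (j + 1)) (s + τ.parts 0) := by
  rw [det_compositeMatrix_eq_finsum_mem, finsum_mem_def]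
  refine finsum_congr fun τ => ?_
  by_cases hr : ∀ j, r ≤ j → τ.parts j = 0
  · have hstab {e : ℕ} (he : max s (τ.parts 0) ≤ e) := jacobiTrudi_eq_of_le gneg gzero he
      (fun k hk => hus k (le_trans (le_max_left _ _) hk))
      (fun k hk => τ.conjugatePart_eq_zero (le_trans (le_max_right _ _) hk))
    rw [jacobiTrudi_eq_of_le hneg hzero (Nat.le_add_right r τ.length) hlr hr,
      hstab (e := s + τ.parts 0) (by omega)]
    by_cases hm : τ.parts 0 ≤ m
    · rw [Set.indicator_of_mem (show τ ∈ NatPartition.box r m from ⟨hr, hm⟩),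
        hstab (e := m) (by omega)]
    · rw [Set.indicator_of_notMem (fun h => hm h.2), jacobiTrudi_eq_zero gneg hu
        τ.antitone_conjugatePart (k := s) (by omega), mul_zero]
      rw [hus s le_rfl, τ.lt_conjugatePart_iff]
      omega
  · rw [Set.indicator_of_notMem (fun h => hr h.1)]
    push Not at hr
    obtain ⟨j, hj, hne⟩ := hr
    have hpos : τ.parts r ≠ 0 := fun h0 => hne (by have := τ.antitone hj; omega)
    have hlen := (τ.lt_length_iff r).2 hpos
    rw [jacobiTrudi_eq_zero hneg hl τ.antitone (k := r) (by omega), mul_zero, zero_mul]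
    rw [hlr r le_rfl]
    omega

theorem det_compositeMatrix_zero [CommRing K] {h g : ℤ → K} (hneg : ∀ k < 0, h k = 0)
    (hzero : h 0 = 1) (gneg : ∀ k < 0, g k = 0) (gzero : g 0 = 1) (r m : ℕ) :
    (compositeMatrix h g r m 0 0).det = 1 := by
  have hblock : (compositeMatrix h g r m 0 0).submatrix finSumFinEquiv finSumFinEquiv =
      Matrix.fromBlocks (Matrix.of fun i j : Fin r => h ((i : ℤ) - (j : ℕ))) 0 0
        (Matrix.of fun i j : Fin m => g ((j : ℤ) - (i : ℕ))) := by
    ext (i | i) (j | j)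
    · simp [compositeMatrix]
    · have := i.2
      simp only [compositeMatrix, Matrix.submatrix_apply, finSumFinEquiv_apply_left,
        finSumFinEquiv_apply_right, Matrix.of_apply, Fin.val_castAdd, Fin.val_natAdd, this,
        if_true, Matrix.fromBlocks_apply₁₂, Matrix.zero_apply, Pi.zero_apply]
      exact hneg _ (by omega)
    · have := j.2
      simp only [compositeMatrix, Matrix.submatrix_apply, finSumFinEquiv_apply_left,
        finSumFinEquiv_apply_right, Matrix.of_apply, Fin.val_castAdd, Fin.val_natAdd,
        show ¬ (r + (i : ℕ) < r) by omega, if_false, Matrix.fromBlocks_apply₂₁,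
        Matrix.zero_apply, Pi.zero_apply]
      exact gneg _ (by omega)
    · simp [compositeMatrix]
  rw [← Matrix.det_submatrix_equiv_self finSumFinEquiv, hblock, Matrix.det_fromBlocks_zero₂₁,
    Matrix.det_of_isLowerTriangular, Matrix.det_of_isUpperTriangular]
  · simp [hzero, gzero]
  · intro i j hij
    have : j < i := hij
    exact gneg _ (by omega)
  · intro i j hij
    have : i < j := hij
    exact hneg _ (by omega)

/-- Reversal of each of the two blocks of `Fin (r + m)`, of lengths `r` and `m`. -/
noncomputable def rowPerm (r m : ℕ) : Equiv.Perm (Fin (r + m)) :=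
  finSumFinEquiv.symm.trans ((Equiv.sumCongr Fin.revPerm Fin.revPerm).trans finSumFinEquiv)

theorem det_compositeMatrix_mul_det_coeffMatrix [Field K] {r m q : ℕ} {l u rho : ℕ → ℕ}
    (hrho_left : ∀ j < r, rho j = l j + q)
    (hrho_right : ∀ b < m, rho (r + m - 1 - b) + u b = q)
    (x : Fin (r + m) → K) (hx : ∀ i, x i ≠ 0) :
    (∏ i, x i) ^ (m + q) *
        ((compositeMatrix (hEval x) (hEval fun t => (x t)⁻¹) r m l u).det * (coeffMatrix x).det) =
      ((-1) ^ (r + m - 1) * ∏ i, x i) ^ m * ((Equiv.Perm.sign (rowPerm r m) : ℤ) *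
        Matrix.det (Matrix.of fun i j : Fin (r + m) =>
          x i ^ (rho j + (r + m - 1 - (j : ℕ))))) := by
  set N : Matrix (Fin (r + m)) (Fin (r + m)) K :=
    Matrix.of fun i j : Fin (r + m) => x i ^ (rho j + (r + m - 1 - (j : ℕ))) with hN
  set κ : K := (-1) ^ (r + m - 1) * ∏ i, x i with hκ
  have hprod : κ ^ m = ∏ a : Fin (r + m), if (a : ℕ) < r then 1 else κ := by
    rw [Fin.prod_univ_add]
    simp
  have hpow : (∏ i, x i) ^ (m + q) = ∏ i, x i ^ (m + q) := (prod_pow _ _ _).symm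
  rw [← Matrix.det_mul, ← Matrix.det_transpose N, ← Matrix.det_permute, hprod, hpow,
    ← Matrix.det_mul_row, ← Matrix.det_mul_column]
  congr 1
  ext a i
  simp only [Matrix.of_apply, Matrix.mul_apply, Matrix.submatrix_apply, id, Matrix.transpose_apply]
  induction a using Fin.addCases with
  | left a =>
    have h := sum_hEval_mul_coeffMatrix x i (l (r - 1 - a) + a)
    have ha := a.2
    simp only [compositeMatrix, Matrix.of_apply, Fin.val_castAdd, ha, if_true]
    push_cast at h
    rw [h]
    simp only [hN, rowPerm, Matrix.of_apply, Equiv.trans_apply, finSumFinEquiv_symm_apply_castAdd,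
      Equiv.sumCongr_apply, Sum.map_inl, Fin.revPerm_apply, finSumFinEquiv_apply_left,
      Fin.val_castAdd, Fin.val_rev]
    rw [hrho_left _ (by omega), ← pow_add, one_mul, show r - (a + 1 : ℕ) = r - 1 - a by omega]
    congr 1
    omega
  | right b =>
    have h := sum_hEval_inv_mul_coeffMatrix x hx i (u b + (m - 1 - b))
    have hb := b.2
    have hr := hrho_right b hb
    simp only [compositeMatrix, Matrix.of_apply, Fin.val_natAdd, if_false,
      show ¬ (r + (b : ℕ) < r) by omega, Nat.add_sub_cancel_left]
    have hidx (c : Fin (r + m)) : (u b : ℤ) + (c : ℕ) - (r + b : ℕ) =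
        ((u b + (m - 1 - b) : ℕ) : ℤ) - (r + m : ℕ) + 1 + (c : ℕ) := by omega
    simp only [hidx]
    rw [h, ← hκ]
    simp only [hN, rowPerm, Matrix.of_apply, Equiv.trans_apply, finSumFinEquiv_symm_apply_natAdd,
      Equiv.sumCongr_apply, Sum.map_inr, Fin.revPerm_apply, finSumFinEquiv_apply_right,
      Fin.val_natAdd, Fin.val_rev]
    rw [show r + (m - (b + 1 : ℕ)) = r + m - 1 - b by omega,
      show r + m - 1 - (r + m - 1 - (b : ℕ)) = b by omega, mul_left_comm]
    congr 1
    rw [inv_pow, mul_inv_eq_iff_eq_mul₀ (pow_ne_zero _ (hx i)), ← pow_add]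
    congr 1
    omega

end Composite

/-- Let `K` be a field, `λ = (λ₁ ≥ … ≥ λ_r > 0)`,
`μ = (μ₁ ≥ … ≥ μ_s > 0)` partitions, `n ≥ r + s`, `q ≥ μ₁`, and `x₁, …, xₙ` pairwise
distinct nonzero elements of `K`.  With `ρ` the partition `ρ_j = λ_j + q` (`1 ≤ j ≤ r`),
`ρ_j = q` (`r < j ≤ n - s`), `ρ_j = q - μ_{n+1-j}` (`n - s < j ≤ n`), we have
`det((x_i^{ρ_j + n - j})) / det((x_i^{n-j}))
  = (x₁⋯xₙ)^q · Σ_τ (-1)^{|τ|} s_{λ/τ}(x) · s_{μ/τ'}(x⁻¹)`,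
the sum being over all partitions `τ` (only those fitting in an `n × n` rectangle
contribute, the remaining terms vanishing); the skew Schur functions are given by
Jacobi–Trudi determinants in the `h_k`.  In other words, the character of the
irreducible `GL_n(ℂ)`-representation of highest weight `(λ₁,…,λ_r,0,…,0,-μ_s,…,-μ₁)`
equals `Σ_τ (-1)^{|τ|} s_{λ/τ}(x) s_{μ/τ'}(x⁻¹)`. -/
theorem statement10 (K : Type*) [Field K] (r s q n : ℕ)
    (lam mu rho : ℕ → ℕ)
    (hlam_anti : Antitone lam) (hlam_pos : ∀ j, j < r → 0 < lam j)
    (hlam_len : ∀ j, r ≤ j → lam j = 0)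
    (hmu_anti : Antitone mu) (hmu_pos : ∀ j, j < s → 0 < mu j)
    (hmu_len : ∀ j, s ≤ j → mu j = 0)
    (hn : r + s ≤ n) (hq : mu 0 ≤ q)
    (hrho1 : ∀ j, j < r → rho j = lam j + q)
    (hrho2 : ∀ j, r ≤ j → j < n - s → rho j = q)
    (hrho3 : ∀ j, n - s ≤ j → j < n → rho j = q - mu (n - 1 - j))
    (hrho4 : ∀ j, n ≤ j → rho j = 0)
    (x : Fin n → K) (hx0 : ∀ i, x i ≠ 0) (hxinj : Function.Injective x) :
    Matrix.det (Matrix.of fun i j : Fin n => x i ^ (rho j + (n - 1 - (j : ℕ)))) /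
        Matrix.det (Matrix.of fun i j : Fin n => x i ^ (n - 1 - (j : ℕ))) =
      (∏ i, x i) ^ q *
        ∑ᶠ τ : NatPartition,
          (-1 : K) ^ τ.size *
            Matrix.det (Matrix.of fun i j : Fin (r + τ.length) =>
              hEval x ((lam i : ℤ) - τ.parts j - (i : ℕ) + (j : ℕ))) *
            Matrix.det (Matrix.of fun i j : Fin (s + τ.parts 0) =>
              hEval (fun t => (x t)⁻¹)
                ((mu i : ℤ) - conjugatePart τ.parts ((j : ℕ) + 1)
                  - (i : ℕ) + (j : ℕ))) := by
  obtain ⟨m, rfl⟩ := Nat.exists_eq_add_of_le (show r ≤ n by omega)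
  have hmain := det_compositeMatrix_mul_det_coeffMatrix (l := lam) (u := mu) (rho := rho) (q := q)
    hrho1 (fun b (hb : b < m) => by
      have hle := hmu_anti (Nat.zero_le b)
      by_cases hbs : b < s
      · rw [hrho3 _ (by omega) (by omega), show r + m - 1 - (r + m - 1 - b) = b by omega]
        omega
      · rw [hrho2 _ (by omega) (by omega), hmu_len b (by omega), add_zero]) x hx0
  have hbase := det_compositeMatrix_mul_det_coeffMatrix (r := r) (m := m) (l := 0) (u := 0)
    (rho := 0) (q := 0) (by simp) (by simp) x hx0
  have hneg (y : Fin (r + m) → K) : ∀ k < 0, hEval y k = 0 := fun k => hEval_of_neg y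
  rw [det_compositeMatrix_zero (hneg _) (hEval_zero _) (hneg _) (hEval_zero _)] at hbase
  rw [det_compositeMatrix_eq_finsum (hneg _) (hEval_zero _) (hneg _) (hEval_zero _)
    hlam_anti hmu_anti hlam_len hmu_len (by omega)] at hmain
  simp only [jacobiTrudi] at hmain
  simp only [Pi.zero_apply, zero_add, add_zero, one_mul] at hbase
  have hprod : ∏ i, x i ≠ 0 := Finset.prod_ne_zero_iff.2 fun i _ => hx0 i
  have hconst : ((-1) ^ (r + m - 1) * ∏ i, x i) ^ m *
      ((Equiv.Perm.sign (rowPerm r m) : ℤ) : K) ≠ 0 := by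
    refine mul_ne_zero (pow_ne_zero _ (mul_ne_zero (pow_ne_zero _ (by simp)) hprod)) ?_
    rcases Int.units_eq_one_or (Equiv.Perm.sign (rowPerm r m)) with h | h <;> simp [h]
  have hvand : Matrix.det (Matrix.of fun i j : Fin (r + m) =>
      x i ^ (r + m - 1 - (j : ℕ))) ≠ 0 := by
    have hrev : (Matrix.of fun i j : Fin (r + m) => x i ^ (r + m - 1 - (j : ℕ))) =
        (Matrix.vandermonde x).submatrix id Fin.revPerm := by
      ext i j
      simp only [Matrix.of_apply, Matrix.submatrix_apply, id, Matrix.vandermonde_apply,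
        Fin.revPerm_apply, Fin.val_rev]
      congr 1
      omega
    rw [hrev, Matrix.det_permute']
    refine mul_ne_zero ?_ (Matrix.det_vandermonde_ne_zero_iff.2 hxinj)
    rcases Int.units_eq_one_or (Equiv.Perm.sign (Fin.revPerm (n := r + m))) with h | h <;> simp [h]
  rw [div_eq_iff hvand]
  refine mul_left_cancel₀ hconst ?_
  rw [mul_assoc, ← hmain, pow_add]
  linear_combination (∏ i, x i) ^ q * (∑ᶠ τ : NatPartition,
    (-1 : K) ^ τ.size *
      Matrix.det (Matrix.of fun i j : Fin (r + τ.length) =>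
        hEval x ((lam i : ℤ) - τ.parts j - (i : ℕ) + (j : ℕ))) *
      Matrix.det (Matrix.of fun i j : Fin (s + τ.parts 0) =>
        hEval (fun t => (x t)⁻¹)
          ((mu i : ℤ) - conjugatePart τ.parts ((j : ℕ) + 1) - (i : ℕ) + (j : ℕ)))) * hbase
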